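/- arXiv:1302.1678 — 2 statements merged into one kernel-verified Lean document; each statement's English description precedes it below -/
import Mathlib

section
/- (Conservation of the additional invariants at the continuous level, eq. (14) of the paper.) Let m ≥ 1, d = 2m, let L : ℝ^d → ℝ^ν be C¹ with Jacobian matrix ∇L(y)^T ∈ ℝ^{ν×d}, let h > 0, s > ν ≥ 1, and let γ̄₀, …, γ̄_{s−1} ∈ ℝ^d be arbitrary vectors. Define η_j = 1 for 0 ≤ j ≤ s−ν−1 and η_j = 1 − h^{2(s−1−j)} α_j for s−ν ≤ j ≤ s−1, where the reals α_j satisfy Σ_{j=s−ν}^{s−1} h^{2(s−1−j)} α_j · φ_j^T γ̄_j = Σ_{j=0}^{s−1} φ_j^T γ̄_j, with φ_j = ∫₀¹ P_j(τ) ∇L(σ(τh)) dτ ∈ ℝ^{d×ν}. If σ : [0, h] → ℝ^d is a C¹ curve satisfying σ'(ch) = Σ_{j=0}^{s−1} P_j(c) η_j γ̄_j for all c ∈ [0,1], then L(σ(h)) = L(σ(0)). -/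
open MeasureTheory Polynomial
open scoped RealInnerProductSpace

/-- The shifted Legendre polynomial `P j`, orthonormal on `[0,1]`. -/
noncomputable def legP (j : ℕ) : ℝ → ℝ := fun x =>
  (Real.sqrt (2 * j + 1) / (Nat.factorial j)) *
    (Polynomial.derivative^[j] ((Polynomial.X ^ 2 - Polynomial.X) ^ j)).eval x

/-!
Along a curve `x` whose velocity is a combination `∑ j, p j t • v j`, the gradient theorem reads
`f (x b) - f (x a) = ∑ j, ⟪∫ p j • ∇f(x), v j⟫`, one scalar product per weighted mean gradient.
For the curve `τ ↦ σ (τ * h)` on `[0, 1]` this is `h * ∑ j, η j * ⟪φ j, γb j⟫`, and the condition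
on the `α j` says precisely that the corrections `1 - η j` cancel the sum with all `η j = 1`.
-/

section GradientTheorem

variable {E : Type*} [NormedAddCommGroup E] [InnerProductSpace ℝ E] [CompleteSpace E]

lemma continuous_gradient_of_contDiff {f : E → ℝ} (hf : ContDiff ℝ 1 f) :
    Continuous (gradient f) :=
  (InnerProductSpace.toDual ℝ E).symm.continuous.comp (hf.continuous_fderiv one_ne_zero)

lemma hasDerivWithinAt_comp_inner_gradient {f : E → ℝ} {x : ℝ → E} {v : E} {s : Set ℝ} {t : ℝ}
    (hf : DifferentiableAt ℝ f (x t)) (hx : HasDerivWithinAt x v s t) :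
    HasDerivWithinAt (fun τ ↦ f (x τ)) ⟪gradient f (x t), v⟫ s t :=
  hf.hasGradientAt.hasFDerivAt.comp_hasDerivWithinAt t hx

lemma integral_eq_sub_of_hasDerivWithinAt_uIcc {F : Type*} [NormedAddCommGroup F]
    [NormedSpace ℝ F] [CompleteSpace F] {g g' : ℝ → F} {a b : ℝ}
    (hg : ∀ t ∈ Set.uIcc a b, HasDerivWithinAt g (g' t) (Set.uIcc a b) t)
    (hg' : IntervalIntegrable g' volume a b) :
    ∫ t in a..b, g' t = g b - g a :=
  intervalIntegral.integral_eq_sub_of_hasDeriv_right (fun t ht ↦ (hg t ht).continuousWithinAt)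
    (fun t ht ↦ ((hg t (Set.Ioo_subset_Icc_self ht)).hasDerivAt
      (Icc_mem_nhds ht.1 ht.2)).hasDerivWithinAt) hg'

lemma intervalIntegral_inner_const {u : ℝ → E} {a b : ℝ} (hu : IntervalIntegrable u volume a b)
    (v : E) : ∫ t in a..b, ⟪u t, v⟫ = ⟪∫ t in a..b, u t, v⟫ := by
  simpa only [innerSL_apply_apply, real_inner_comm] using
    (innerSL ℝ v).intervalIntegral_comp_comm hu

lemma sub_eq_sum_inner_integral_smul_gradient {ι : Type*} {S : Finset ι} {f : E → ℝ}
    (hf : ContDiff ℝ 1 f) {x : ℝ → E} {p : ι → ℝ → ℝ} {v : ι → E} {a b : ℝ}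
    (hp : ∀ j ∈ S, IntervalIntegrable (p j) volume a b)
    (hx : ∀ t ∈ Set.uIcc a b, HasDerivWithinAt x (∑ j ∈ S, p j t • v j) (Set.uIcc a b) t) :
    f (x b) - f (x a) = ∑ j ∈ S, ⟪∫ t in a..b, p j t • gradient f (x t), v j⟫ := by
  have hgrad : ContinuousOn (fun t ↦ gradient f (x t)) (Set.uIcc a b) :=
    (continuous_gradient_of_contDiff hf).comp_continuousOn
      fun t ht ↦ (hx t ht).continuousWithinAt
  have hweighted : ∀ j ∈ S,
      IntervalIntegrable (fun t ↦ p j t • gradient f (x t)) volume a b :=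
    fun j hj ↦ (hp j hj).smul_continuousOn hgrad
  have hterm : ∀ j ∈ S,
      IntervalIntegrable (fun t ↦ ⟪p j t • gradient f (x t), v j⟫) volume a b :=
    fun j hj ↦ ⟨(hweighted j hj).1.inner_const (v j), (hweighted j hj).2.inner_const (v j)⟩
  have hsum :
      IntervalIntegrable (fun t ↦ ∑ j ∈ S, ⟪p j t • gradient f (x t), v j⟫) volume a b := by
    simpa only [Finset.sum_fn] using IntervalIntegrable.sum S hterm
  have hderiv : ∀ t ∈ Set.uIcc a b, HasDerivWithinAt (fun τ ↦ f (x τ))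
      (∑ j ∈ S, ⟪p j t • gradient f (x t), v j⟫) (Set.uIcc a b) t := fun t ht ↦ by
    simpa only [inner_sum, real_inner_smul_left, real_inner_smul_right] using
      hasDerivWithinAt_comp_inner_gradient (hf.differentiable one_ne_zero (x t)) (hx t ht)
  calc f (x b) - f (x a)
      = ∫ t in a..b, ∑ j ∈ S, ⟪p j t • gradient f (x t), v j⟫ :=
        (integral_eq_sub_of_hasDerivWithinAt_uIcc hderiv hsum).symm
    _ = ∑ j ∈ S, ∫ t in a..b, ⟪p j t • gradient f (x t), v j⟫ :=
        intervalIntegral.integral_finsetSum hterm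
    _ = ∑ j ∈ S, ⟪∫ t in a..b, p j t • gradient f (x t), v j⟫ :=
        Finset.sum_congr rfl fun j hj ↦ intervalIntegral_inner_const (hweighted j hj) (v j)

end GradientTheorem

lemma hasDerivWithinAt_comp_mul_right_uIcc {F : Type*} [NormedAddCommGroup F] [NormedSpace ℝ F]
    {σ : ℝ → F} {v : F} {a b c h : ℝ}
    (hσ : HasDerivWithinAt σ v (Set.uIcc (a * h) (b * h)) (c * h)) :
    HasDerivWithinAt (fun τ ↦ σ (τ * h)) (h • v) (Set.uIcc a b) c :=
  hσ.scomp c (hasDerivAt_mul_const h).hasDerivWithinAt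
    (Set.mapsTo_iff_image_subset.mpr (Set.image_mul_const_uIcc h a b).subset)

lemma sum_mul_eq_zero_of_corrected_weights {ι R : Type*} [Ring R] {S T : Finset ι} (hTS : T ⊆ S)
    {η β a : ι → R} (hη : ∀ j ∈ S, j ∉ T → η j = 1) (hηT : ∀ j ∈ T, η j = 1 - β j)
    (hβ : ∑ j ∈ T, β j * a j = ∑ j ∈ S, a j) :
    ∑ j ∈ S, η j * a j = 0 := by
  have hdefect : ∑ j ∈ T, β j * a j = ∑ j ∈ S, (1 - η j) * a j := by
    rw [← Finset.sum_subset hTS fun j hj hjT ↦ by rw [hη j hj hjT, sub_self, zero_mul]]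
    exact Finset.sum_congr rfl fun j hj ↦ by rw [hηT j hj, sub_sub_cancel]
  rw [hdefect] at hβ
  simpa only [sub_mul, one_mul, Finset.sum_sub_distrib, sub_eq_self] using hβ

lemma continuous_legP (j : ℕ) : Continuous (legP j) :=
  continuous_const.mul (Polynomial.continuous _)

theorem stmt8_general {E : Type*} [NormedAddCommGroup E] [InnerProductSpace ℝ E] [CompleteSpace E]
    {ι κ : Type*} {S T : Finset ι} (hTS : T ⊆ S)
    {p : ι → ℝ → ℝ} (hp : ∀ j ∈ S, IntervalIntegrable (p j) volume 0 1)
    {L : κ → E → ℝ} (hL : ∀ i, ContDiff ℝ 1 (L i)) {h : ℝ} {γb : ι → E} {σ : ℝ → E}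
    {φ : ι → κ → E} (hφ : ∀ j i, φ j i = ∫ τ in (0 : ℝ)..1, p j τ • gradient (L i) (σ (τ * h)))
    {β η : ι → ℝ} (hβ : ∀ i, ∑ j ∈ T, β j * ⟪φ j i, γb j⟫ = ∑ j ∈ S, ⟪φ j i, γb j⟫)
    (hη : ∀ j ∈ S, j ∉ T → η j = 1) (hηT : ∀ j ∈ T, η j = 1 - β j)
    (hσ : ∀ c ∈ Set.Icc (0 : ℝ) 1,
      HasDerivWithinAt σ (∑ j ∈ S, p j c • (η j • γb j)) (Set.uIcc 0 h) (c * h)) (i : κ) :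
    L i (σ h) = L i (σ 0) := by
  have hcurve : ∀ c ∈ Set.uIcc (0 : ℝ) 1, HasDerivWithinAt (fun τ ↦ σ (τ * h))
      (∑ j ∈ S, p j c • (h * η j) • γb j) (Set.uIcc 0 1) c := fun c hc ↦ by
    have hσc : HasDerivWithinAt σ (∑ j ∈ S, p j c • (η j • γb j))
        (Set.uIcc (0 * h) (1 * h)) (c * h) := by
      simpa only [zero_mul, one_mul] using hσ c (Set.uIcc_of_le (zero_le_one' ℝ) ▸ hc)
    simpa only [Finset.smul_sum, smul_smul, mul_left_comm h] using
      hasDerivWithinAt_comp_mul_right_uIcc hσc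
  have hchange := sub_eq_sum_inner_integral_smul_gradient (hL i) hp hcurve
  simp only [one_mul, zero_mul] at hchange
  refine sub_eq_zero.mp ?_
  calc L i (σ h) - L i (σ 0) = ∑ j ∈ S, ⟪φ j i, (h * η j) • γb j⟫ := by
        simpa only [hφ] using hchange
    _ = h * ∑ j ∈ S, η j * ⟪φ j i, γb j⟫ := by
        simp only [real_inner_smul_right, mul_assoc, Finset.mul_sum]
    _ = 0 := by rw [sum_mul_eq_zero_of_corrected_weights hTS hη hηT (hβ i), mul_zero]

/-- conservation of the additional invariants at the continuous level,
eq. (14).  Let `L : ℝ^d → ℝ^ν` be `C¹` (given by its `ν` components), `γ̄₀, …, γ̄_{s-1}`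
arbitrary, `η_j = 1` for `j ≤ s-ν-1` and `η_j = 1 - h^{2(s-1-j)} α_j` otherwise, where the
`α_j` solve `∑_{j=s-ν}^{s-1} h^{2(s-1-j)} α_j φ_jᵀ γ̄_j = ∑_{j=0}^{s-1} φ_jᵀ γ̄_j` with
`φ_j = ∫₀¹ P_j(τ) ∇L(σ(τh)) dτ`.  If `σ'(ch) = ∑_{j<s} P_j(c) η_j γ̄_j` on `[0,1]`, then
`L(σ(h)) = L(σ(0))`. -/
theorem stmt8 (m : ℕ) (hm : 1 ≤ m) (ν s : ℕ) (hν : 1 ≤ ν) (hνs : ν < s)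
    (L : Fin ν → EuclideanSpace ℝ (Fin (2 * m)) → ℝ) (hL : ∀ i, ContDiff ℝ 1 (L i))
    (h : ℝ) (hh : 0 < h)
    (γb : ℕ → EuclideanSpace ℝ (Fin (2 * m)))
    (σ : ℝ → EuclideanSpace ℝ (Fin (2 * m)))
    (φ : ℕ → Fin ν → EuclideanSpace ℝ (Fin (2 * m)))
    (hφ : ∀ j i, φ j i = ∫ τ in (0:ℝ)..1, legP j τ • gradient (L i) (σ (τ * h)))
    (α : ℕ → ℝ)
    (hα : ∀ i : Fin ν,
      ∑ j ∈ Finset.Ico (s - ν) s, h ^ (2 * (s - 1 - j)) * α j * ⟪φ j i, γb j⟫ =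
      ∑ j ∈ Finset.range s, ⟪φ j i, γb j⟫)
    (η : ℕ → ℝ)
    (hη₁ : ∀ j, j ≤ s - ν - 1 → η j = 1)
    (hη₂ : ∀ j, s - ν ≤ j → j ≤ s - 1 → η j = 1 - h ^ (2 * (s - 1 - j)) * α j)
    (hσ' : ∀ c ∈ Set.Icc (0:ℝ) 1,
      HasDerivAt σ (∑ j ∈ Finset.range s, legP j c • (η j • γb j)) (c * h)) :
    ∀ i : Fin ν, L i (σ h) = L i (σ 0) := by
  have hIco : Finset.Ico (s - ν) s ⊆ Finset.range s := fun j hj ↦ by grind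
  exact stmt8_general hIco (fun j _ ↦ (continuous_legP j).intervalIntegrable 0 1) hL hφ hα
    (fun j hj hjT ↦ hη₁ j (by grind)) (fun j hj ↦ hη₂ j (by grind) (by grind))
    fun c hc ↦ (hσ' c hc).hasDerivWithinAt
end

section
/- (Discrete analogue of Lemma 3, supporting Theorem 2 of the paper.) Let d ≥ 1, let g₁, g₂ : ℝ^d → ℝ^d be C^∞ maps with ⟨g₁(y), g₂(y)⟩ = 0 for all y ∈ ℝ^d, and let σ : ℝ → ℝ^d be C^∞. Let s ≥ 1 and let r, k ≥ s. Let (ĉ_ℓ, b̂_ℓ)_{ℓ=1}^r be a quadrature exact for polynomials of degree ≤ 2r−1 on [0,1], and (c_ℓ, b_ℓ)_{ℓ=1}^k a quadrature exact for polynomials of degree ≤ 2k−1 on [0,1]. Then b̂(h) := Σ_{j=0}^{s−1} ⟨Σ_{ℓ=1}^r b̂_ℓ P_j(ĉ_ℓ) g₁(σ(ĉ_ℓ h)), Σ_{ℓ=1}^k b_ℓ P_j(c_ℓ) g₂(σ(c_ℓ h))⟩ is O(h^{2s}) as h → 0⁺. -/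
/-!
The discrete analogue of Parseval's identity: a quadrature of exactness degree `2s - 1` computes the
Legendre coefficients of `t ^ m` exactly for `m < s`, so
`∑_{j<s} (∑ b̂ P_j tⁿ) (∑ b P_j tᵐ) = ∑ b̂ tⁿ⁺ᵐ` whenever `n + m < 2s`, because one of `n`, `m` is
then `< s`. Hence `∑_{j<s} ⟨∑ b̂ P_j f₁(ĉh), ∑ b P_j f₂(ch)⟩` and `∑ b̂ ⟨f₁(ĉh), f₂(ĉh)⟩` have the
same Taylor polynomial of degree `2s - 1` in `h`, and the latter vanishes for `f₁ ⟂ f₂`.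
-/

open MeasureTheory Polynomial
open scoped RealInnerProductSpace

open Asymptotics Filter Topology

section UnitIntegral

/-- The linear functional `p ↦ ∫₀¹ p(x) dx` on real polynomials, with respect to which the shifted
Legendre polynomials are orthonormal. -/
noncomputable def unitIntegral : ℝ[X] →ₗ[ℝ] ℝ where
  toFun p := ∫ x in (0 : ℝ)..1, p.eval x
  map_add' p q := by
    simp only [eval_add]
    exact intervalIntegral.integral_add (p.continuous.intervalIntegrable _ _)
      (q.continuous.intervalIntegrable _ _)
  map_smul' a p := by simp

lemma unitIntegral_C_mul (a : ℝ) (p : ℝ[X]) : unitIntegral (C a * p) = a * unitIntegral p := by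
  rw [← smul_eq_C_mul, map_smul, smul_eq_mul]

lemma unitIntegral_derivative (p : ℝ[X]) :
    unitIntegral (derivative p) = p.eval 1 - p.eval 0 :=
  intervalIntegral.integral_eq_sub_of_hasDerivAt (fun x _ => p.hasDerivAt x)
    ((derivative p).continuous.intervalIntegrable _ _)

lemma unitIntegral_mul_derivative (p q : ℝ[X]) :
    unitIntegral (p * derivative q) =
      (p * q).eval 1 - (p * q).eval 0 - unitIntegral (derivative p * q) := by
  rw [← unitIntegral_derivative, derivative_mul, map_add, add_sub_cancel_left]

lemma X_sq_sub_X_dvd_iterate_derivative_pow {R : Type*} [CommRing R] {m j : ℕ} (hm : m < j) :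
    (X ^ 2 - X : R[X]) ∣ derivative^[m] ((X ^ 2 - X) ^ j) :=
  (dvd_pow_self _ (Nat.sub_ne_zero_of_lt hm)).trans (pow_sub_dvd_iterate_derivative_pow _ j m)

lemma unitIntegral_mul_iterate_derivative_pow {j m : ℕ} (hm : m ≤ j) (q : ℝ[X]) :
    unitIntegral (q * derivative^[m] ((X ^ 2 - X) ^ j)) =
      (-1) ^ m * unitIntegral (derivative^[m] q * (X ^ 2 - X) ^ j) := by
  induction m generalizing q with
  | zero => simp
  | succ m ih =>
    obtain ⟨u, hu⟩ := X_sq_sub_X_dvd_iterate_derivative_pow (R := ℝ) hm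
    have hzero : (derivative^[m] ((X ^ 2 - X : ℝ[X]) ^ j)).eval 0 = 0 := by simp [hu]
    have hone : (derivative^[m] ((X ^ 2 - X : ℝ[X]) ^ j)).eval 1 = 0 := by simp [hu]
    rw [Function.iterate_succ_apply', unitIntegral_mul_derivative, eval_mul, eval_mul, hzero, hone,
      ih (Nat.le_of_succ_le hm), Function.iterate_succ_apply, pow_succ]
    ring

end UnitIntegral

section Legendre

/-- The shifted Legendre polynomial `P j` as an element of `ℝ[X]`; `legP j` is its evaluation. -/
noncomputable def legPoly (j : ℕ) : ℝ[X] :=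
  C (√(2 * j + 1) / j.factorial) * derivative^[j] ((X ^ 2 - X) ^ j)

lemma legP_eq_eval_legPoly (j : ℕ) (x : ℝ) : legP j x = (legPoly j).eval x := by
  simp [legP, legPoly]

lemma iterate_derivative_X_sq_sub_X_pow (j : ℕ) :
    derivative^[j] ((X ^ 2 - X : ℝ[X]) ^ j) =
      C ((-1 : ℝ) ^ j * j.factorial) * (shiftedLegendre j).map (Int.castRingHom ℝ) := by
  have rodrigues := congrArg (Polynomial.map (Int.castRingHom ℝ))
    (factorial_mul_shiftedLegendre_eq j)
  have hpow : (X ^ 2 - X : ℝ[X]) ^ j = C ((-1) ^ j) * (X ^ j * (1 - X) ^ j) := by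
    rw [C_pow, ← mul_pow, ← mul_pow, C_neg, C_1]
    ring
  rw [← iterate_derivative_map] at rodrigues
  simp only [Polynomial.map_mul, Polynomial.map_natCast, Polynomial.map_pow, Polynomial.map_sub,
    map_X, Polynomial.map_one] at rodrigues
  rw [hpow, iterate_derivative_C_mul, ← rodrigues, C_mul, C_eq_natCast, mul_assoc]

lemma legPoly_eq_C_mul_shiftedLegendre (j : ℕ) :
    legPoly j = C ((-1 : ℝ) ^ j * √(2 * j + 1)) * (shiftedLegendre j).map (Int.castRingHom ℝ) := by
  rw [legPoly, iterate_derivative_X_sq_sub_X_pow, ← mul_assoc, ← C_mul]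
  congr 2
  field_simp

lemma degree_legPoly (j : ℕ) : (legPoly j).degree = j := by
  have hscale : (-1 : ℝ) ^ j * √(2 * j + 1) ≠ 0 :=
    mul_ne_zero (pow_ne_zero _ (by norm_num)) (by positivity)
  rw [legPoly_eq_C_mul_shiftedLegendre, degree_C_mul hscale,
    degree_map_eq_of_injective (RingHom.injective_int _), degree_shiftedLegendre]

lemma natDegree_legPoly (j : ℕ) : (legPoly j).natDegree = j :=
  natDegree_eq_of_degree_eq_some (degree_legPoly j)

lemma sq_eval_zero_legPoly (j : ℕ) : (legPoly j).eval 0 ^ 2 = 2 * j + 1 := by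
  have hcoeff : ((shiftedLegendre j).map (Int.castRingHom ℝ)).eval 0 = 1 := by
    simp [← coeff_zero_eq_eval_zero, coeff_shiftedLegendre]
  rw [legPoly_eq_C_mul_shiftedLegendre, eval_C_mul, hcoeff, mul_one, mul_pow, ← pow_mul,
    (even_two.mul_left j).neg_one_pow, one_mul, Real.sq_sqrt (by positivity)]

lemma unitIntegral_mul_legPoly_of_degree_lt {j : ℕ} {q : ℝ[X]} (hq : q.degree < j) :
    unitIntegral (q * legPoly j) = 0 := by
  rw [legPoly, mul_left_comm, unitIntegral_C_mul, unitIntegral_mul_iterate_derivative_pow le_rfl,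
    iterate_derivative_eq_zero_of_degree_lt hq]
  simp

lemma degree_X_sub_one_mul_derivative_sub_lt {R : Type*} [CommRing R] {p : R[X]} {n : ℕ}
    (hp : p.natDegree ≤ n) : ((X - 1) * derivative p - n • p).degree < (n : WithBot ℕ) := by
  rw [degree_lt_iff_coeff_zero]
  intro m hm
  have hsucc : p.coeff (m + 1) = 0 := coeff_eq_zero_of_natDegree_lt (by omega)
  have hX : (X * derivative p).coeff m = p.coeff m * m := by
    cases m <;> simp [coeff_derivative]
  rw [sub_mul, one_mul, coeff_sub, coeff_sub, hX, coeff_derivative, hsucc, coeff_smul]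
  rcases hm.eq_or_lt with rfl | hlt
  · simp [mul_comm]
  · simp [coeff_eq_zero_of_natDegree_lt (hp.trans_lt hlt)]

-- Integrate `((X - 1) P²)' = (2j + 1) P² + 2 ((X - 1) P' - j P) P`, whose last factor has degree
-- less than `j`: this gives `P(0)² = (2j + 1) ∫ P²`.
lemma unitIntegral_legPoly_mul_self (j : ℕ) : unitIntegral (legPoly j * legPoly j) = 1 := by
  have hderiv : derivative ((X - 1) * (legPoly j * legPoly j)) =
      C (2 * j + 1 : ℝ) * (legPoly j * legPoly j) +
        C 2 * (((X - 1) * derivative (legPoly j) - j • legPoly j) * legPoly j) := by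
    simp only [derivative_mul, derivative_sub, derivative_X, derivative_one, C_add, C_mul,
      C_eq_natCast, C_1, map_ofNat, nsmul_eq_mul]
    ring
  have hint := unitIntegral_derivative ((X - 1) * (legPoly j * legPoly j))
  rw [hderiv, map_add, unitIntegral_C_mul, unitIntegral_C_mul,
    unitIntegral_mul_legPoly_of_degree_lt
      (degree_X_sub_one_mul_derivative_sub_lt (natDegree_legPoly j).le)] at hint
  have hsq := sq_eval_zero_legPoly j
  simp only [eval_mul, eval_sub, eval_X, eval_one] at hint
  have hpos : (2 * j + 1 : ℝ) ≠ 0 := by positivity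
  apply mul_left_cancel₀ hpos
  linear_combination hint + hsq

lemma unitIntegral_legPoly_mul_legPoly (i j : ℕ) :
    unitIntegral (legPoly i * legPoly j) = if i = j then 1 else 0 := by
  split_ifs with hij
  · rw [hij, unitIntegral_legPoly_mul_self]
  · rcases Nat.lt_or_gt_of_ne hij with h | h
    · exact unitIntegral_mul_legPoly_of_degree_lt (by rw [degree_legPoly]; exact_mod_cast h)
    · rw [mul_comm]
      exact unitIntegral_mul_legPoly_of_degree_lt (by rw [degree_legPoly]; exact_mod_cast h)

/-- The shifted Legendre polynomials as a polynomial sequence (the `j`-th term has degree `j`), so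
that the first `s` of them span the polynomials of degree less than `s`. -/
noncomputable def legSequence : Polynomial.Sequence ℝ where
  elems' := legPoly
  degree_eq' := degree_legPoly

lemma sum_unitIntegral_smul_legPoly {s : ℕ} {p : ℝ[X]} (hp : p.degree < s) :
    ∑ j ∈ Finset.range s, unitIntegral (p * legPoly j) • legPoly j = p := by
  replace hp : p ∈ Submodule.span ℝ (legPoly '' Set.Iio s) := by
    have := legSequence.span_degreeLT (m := s) fun i _ =>
      (leadingCoeff_ne_zero.mpr (legSequence.ne_zero i)).isUnit
    exact this ▸ mem_degreeLT.mpr hp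
  induction hp using Submodule.span_induction with
  | mem _ h =>
    obtain ⟨i, hi, rfl⟩ := h
    simpa [unitIntegral_legPoly_mul_legPoly] using fun h : s ≤ i => absurd hi (not_lt.mpr h)
  | zero => simp
  | add p q _ _ hp hq => simp only [add_mul, map_add, add_smul, Finset.sum_add_distrib, hp, hq]
  | smul a p _ hp =>
    simp only [smul_mul_assoc, map_smul, smul_assoc, ← Finset.smul_sum, hp]

end Legendre

section Quadrature

variable {ι κ : Type*} [Fintype ι] [Fintype κ]

/-- The quadrature on `[0,1]` with nodes `c` and weights `b` is exact for polynomials of degree at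
most `n`. -/
def IsExactQuadrature (n : ℕ) (c b : ι → ℝ) : Prop :=
  ∀ q : ℝ[X], q.natDegree ≤ n → ∑ ℓ, b ℓ * q.eval (c ℓ) = unitIntegral q

lemma IsExactQuadrature.mono {n m : ℕ} {c b : ι → ℝ} (hnm : n ≤ m)
    (h : IsExactQuadrature m c b) : IsExactQuadrature n c b :=
  fun q hq => h q (hq.trans hnm)

variable {s : ℕ} {c₁ b₁ : ι → ℝ} {c₂ b₂ : κ → ℝ}

-- The second quadrature yields the exact Legendre coefficients of `q`, so that `∑ⱼ` reassembles `q`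
-- at the nodes of the first one.
lemma IsExactQuadrature.sum_legendre_mul_of_lt (h₁ : IsExactQuadrature (2 * s - 1) c₁ b₁)
    (h₂ : IsExactQuadrature (2 * s - 1) c₂ b₂) {p q : ℝ[X]}
    (hpq : p.natDegree + q.natDegree < 2 * s) (hq : q.natDegree < s) :
    ∑ j ∈ Finset.range s, (∑ ℓ, b₁ ℓ * legP j (c₁ ℓ) * p.eval (c₁ ℓ)) *
      (∑ ℓ, b₂ ℓ * legP j (c₂ ℓ) * q.eval (c₂ ℓ)) = unitIntegral (p * q) := by
  have hcoeff : ∀ j ∈ Finset.range s,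
      ∑ ℓ, b₂ ℓ * legP j (c₂ ℓ) * q.eval (c₂ ℓ) = unitIntegral (q * legPoly j) := by
    intro j hj
    have hdeg : (q * legPoly j).natDegree ≤ 2 * s - 1 := by
      have := natDegree_mul_le (p := q) (q := legPoly j)
      rw [natDegree_legPoly] at this
      have := Finset.mem_range.mp hj
      omega
    rw [← h₂ _ hdeg]
    simp only [legP_eq_eval_legPoly, eval_mul, mul_assoc, mul_comm (q.eval _)]
  have hexpand : ∑ j ∈ Finset.range s, unitIntegral (q * legPoly j) • legPoly j = q :=
    sum_unitIntegral_smul_legPoly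
      (degree_le_natDegree.trans_lt (by exact_mod_cast hq))
  have hdeg : (p * q).natDegree ≤ 2 * s - 1 := natDegree_mul_le.trans (by omega)
  calc _ = ∑ j ∈ Finset.range s, ∑ ℓ, b₁ ℓ * (p.eval (c₁ ℓ) *
        (unitIntegral (q * legPoly j) • legPoly j).eval (c₁ ℓ)) := by
        refine Finset.sum_congr rfl fun j hj => ?_
        rw [hcoeff j hj, Finset.sum_mul]
        refine Finset.sum_congr rfl fun ℓ _ => ?_
        rw [legP_eq_eval_legPoly, eval_smul, smul_eq_mul]
        ring
    _ = ∑ ℓ, b₁ ℓ * (p * q).eval (c₁ ℓ) := by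
        rw [Finset.sum_comm]
        simp only [← Finset.mul_sum, ← eval_finsetSum, hexpand, eval_mul]
    _ = unitIntegral (p * q) := h₁ _ hdeg

lemma IsExactQuadrature.sum_legendre_mul (h₁ : IsExactQuadrature (2 * s - 1) c₁ b₁)
    (h₂ : IsExactQuadrature (2 * s - 1) c₂ b₂) {p q : ℝ[X]}
    (hpq : p.natDegree + q.natDegree < 2 * s) :
    ∑ j ∈ Finset.range s, (∑ ℓ, b₁ ℓ * legP j (c₁ ℓ) * p.eval (c₁ ℓ)) *
      (∑ ℓ, b₂ ℓ * legP j (c₂ ℓ) * q.eval (c₂ ℓ)) = unitIntegral (p * q) := by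
  rcases lt_or_ge q.natDegree s with hq | hq
  · exact h₁.sum_legendre_mul_of_lt h₂ hpq hq
  · rw [mul_comm p, ← h₂.sum_legendre_mul_of_lt h₁ (by omega) (by omega)]
    exact Finset.sum_congr rfl fun j _ => mul_comm _ _

end Quadrature

section Asymptotics

lemma exists_pos_forall_norm_le_of_isBigO_pow {E : Type*} [NormedAddCommGroup E] {u : ℝ → E} {n : ℕ}
    (hu : u =O[𝓝[>] 0] fun h => h ^ n) :
    ∃ C > (0 : ℝ), ∃ h₀ > (0 : ℝ), ∀ h : ℝ, 0 < h → h ≤ h₀ → ‖u h‖ ≤ C * h ^ n := by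
  obtain ⟨C, hC, hbound⟩ := hu.exists_pos
  obtain ⟨h₀, hh₀, hsub⟩ := mem_nhdsGT_iff_exists_Ioc_subset.mp hbound.bound
  refine ⟨C, hC, h₀, hh₀, fun h hpos hle => ?_⟩
  have hnorm : ‖u h‖ ≤ C * ‖h ^ n‖ := hsub ⟨hpos, hle⟩
  rwa [Real.norm_of_nonneg (pow_nonneg hpos.le n)] at hnorm

lemma isBigO_pow_pow_nhds_zero {n m : ℕ} (hnm : n ≤ m) :
    (fun h : ℝ => h ^ m) =O[𝓝 0] fun h => h ^ n := by
  rcases hnm.eq_or_lt with rfl | hlt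
  · exact isBigO_refl _ _
  · exact (isLittleO_pow_pow hlt).isBigO

variable {E F G : Type*} [NormedAddCommGroup E] [NormedSpace ℝ E] [NormedAddCommGroup F]
  [NormedSpace ℝ F] [NormedAddCommGroup G] [NormedSpace ℝ G]

lemma exists_sub_sum_pow_smul_isBigO {f : ℝ → E} {N : ℕ} (hf : ContDiffAt ℝ N f 0) :
    ∃ a : ℕ → E, (fun t => f t - ∑ n ∈ Finset.range N, t ^ n • a n) =O[𝓝 0] fun t => t ^ N := by
  obtain ⟨u, hu, hfu⟩ := hf.contDiffOn le_rfl (by simp)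
  obtain ⟨ε, hε, hball⟩ := Metric.mem_nhds_iff.mp hu
  have htaylor := taylor_isLittleO (convex_ball (0 : ℝ) ε) (Metric.mem_ball_self hε)
    (hfu.mono hball)
  rw [Metric.isOpen_ball.nhdsWithin_eq (Metric.mem_ball_self hε)] at htaylor
  set a : ℕ → E := fun n => (n.factorial : ℝ)⁻¹ • iteratedDerivWithin n f (Metric.ball 0 ε) 0
  have hlast : (fun t : ℝ => t ^ N • a N) =O[𝓝 0] fun t => t ^ N := by
    simpa using (isBigO_refl (fun t : ℝ => t ^ N) (𝓝 0)).smul (isBigO_const_const (a N)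
      (one_ne_zero (α := ℝ)) (𝓝 0))
  refine ⟨a, ((htaylor.isBigO.congr_right fun t => by rw [sub_zero]).add hlast).congr_left
    fun t => ?_⟩
  have hsum : taylorWithinEval f N (Metric.ball 0 ε) 0 t =
      ∑ n ∈ Finset.range (N + 1), t ^ n • a n := by
    simp only [taylor_within_apply, sub_zero, a, smul_smul, mul_comm]
  rw [hsum, Finset.sum_range_succ]
  abel

lemma isBigO_bilin_sub_bilin (B : E →L[ℝ] F →L[ℝ] G) {α : Type*} {l : Filter α}
    {u u' : α → E} {v v' : α → F} {p : α → ℝ} (hu : (fun x => u x - u' x) =O[l] p)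
    (hv : (fun x => v x - v' x) =O[l] p) (hu' : u' =O[l] fun _ => (1 : ℝ))
    (hv_one : v =O[l] fun _ => (1 : ℝ)) :
    (fun x => B (u x) (v x) - B (u' x) (v' x)) =O[l] p := by
  have hleft : (fun x => B (u x - u' x) (v x)) =O[l] p := by
    simpa using B.isBoundedBilinearMap.isBigO_comp.trans (hu.norm_left.mul hv_one.norm_left)
  have hright : (fun x => B (u' x) (v x - v' x)) =O[l] p := by
    simpa using B.isBoundedBilinearMap.isBigO_comp.trans (hu'.norm_left.mul hv.norm_left)
  refine (hleft.add hright).congr_left fun x => ?_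
  simp only [map_sub, sub_apply]
  abel

lemma sum_smul_bilin_sum_smul_sum_smul (B : E →L[ℝ] F →L[ℝ] G) {ι κ μ : Type*} (r : Finset ι)
    (s : Finset κ) (t : Finset μ) (w : ι → ℝ) (α : ι → κ → ℝ) (β : ι → μ → ℝ) (u : κ → E)
    (v : μ → F) :
    ∑ i ∈ r, w i • B (∑ k ∈ s, α i k • u k) (∑ m ∈ t, β i m • v m) =
      ∑ k ∈ s, ∑ m ∈ t, (∑ i ∈ r, w i * (α i k * β i m)) • B (u k) (v m) := by
  simp only [map_sum, map_smul, sum_apply, smul_apply, Finset.smul_sum, Finset.sum_smul, smul_smul]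
  rw [Finset.sum_comm, Finset.sum_comm (s := s)]
  refine Finset.sum_congr rfl fun m _ => ?_
  rw [Finset.sum_comm]
  simp only [mul_comm (β _ m)]

lemma isBigO_sum_smul_bilin_of_moments_eq_zero (B : E →L[ℝ] F →L[ℝ] G) {ι : Type*} [Fintype ι]
    {w x y : ι → ℝ} {N : ℕ} (hmoment : ∀ n m, n + m < N → ∑ i, w i * (x i ^ n * y i ^ m) = 0)
    {f : ℝ → E} {g : ℝ → F} (hf : ContDiffAt ℝ N f 0) (hg : ContDiffAt ℝ N g 0) :
    (fun h => ∑ i, w i • B (f (x i * h)) (g (y i * h))) =O[𝓝 0] fun h => h ^ N := by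
  obtain ⟨a, ha⟩ := exists_sub_sum_pow_smul_isBigO hf
  obtain ⟨b, hb⟩ := exists_sub_sum_pow_smul_isBigO hg
  set S : ℝ → E := fun t => ∑ n ∈ Finset.range N, t ^ n • a n
  set T : ℝ → F := fun t => ∑ m ∈ Finset.range N, t ^ m • b m
  have hS : Continuous S := by fun_prop
  have htendsto : ∀ z : ℝ, Tendsto (fun h : ℝ => z * h) (𝓝 0) (𝓝 0) := fun z => by
    simpa using (continuous_const_mul z).tendsto 0
  have hpow : ∀ z : ℝ, (fun h : ℝ => (z * h) ^ N) =O[𝓝 0] fun h => h ^ N := fun z => by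
    simpa only [mul_pow] using (isBigO_refl (fun h : ℝ => h ^ N) (𝓝 0)).const_mul_left (z ^ N)
  have hremainder : (fun h => ∑ i, w i •
      (B (f (x i * h)) (g (y i * h)) - B (S (x i * h)) (T (y i * h)))) =O[𝓝 0] fun h => h ^ N :=
    IsBigO.fun_sum fun i _ => (isBigO_bilin_sub_bilin B
      ((ha.comp_tendsto (htendsto (x i))).trans (hpow (x i)))
      ((hb.comp_tendsto (htendsto (y i))).trans (hpow (y i)))
      ((hS.continuousAt.tendsto.comp (htendsto (x i))).isBigO_one ℝ)
      ((hg.continuousAt.tendsto.comp (htendsto (y i))).isBigO_one ℝ)).const_smul_left (w i)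
  have hpoly : (fun h => ∑ i, w i • B (S (x i * h)) (T (y i * h))) =O[𝓝 0] fun h => h ^ N := by
    have hscale : ∀ (h : ℝ) n m, ∑ i, w i * ((x i * h) ^ n * (y i * h) ^ m) =
        h ^ (n + m) * ∑ i, w i * (x i ^ n * y i ^ m) := fun h n m => by
      rw [Finset.mul_sum]
      exact Finset.sum_congr rfl fun i _ => by ring
    simp only [S, T, sum_smul_bilin_sum_smul_sum_smul, hscale]
    refine IsBigO.fun_sum fun n _ => IsBigO.fun_sum fun m _ => ?_
    rcases lt_or_ge (n + m) N with hlt | hge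
    · simpa only [hmoment n m hlt, mul_zero, zero_smul] using isBigO_zero _ _
    · simpa only [mul_smul, smul_eq_mul, mul_one] using (isBigO_pow_pow_nhds_zero hge).smul
        (isBigO_const_const _ (one_ne_zero (α := ℝ)) (𝓝 0))
  refine (hremainder.add hpoly).congr_left fun h => ?_
  simp only [smul_sub, Finset.sum_sub_distrib, sub_add_cancel]

end Asymptotics

section LegendreExpansion

variable {E F G : Type*} [NormedAddCommGroup E] [NormedSpace ℝ E] [NormedAddCommGroup F]
  [NormedSpace ℝ F] [NormedAddCommGroup G] [NormedSpace ℝ G]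
  {ι κ : Type*} [Fintype ι] [Fintype κ] {s : ℕ} {c₁ b₁ : ι → ℝ} {c₂ b₂ : κ → ℝ}

lemma sum_bilin_legendre_eq_sum_prod_smul (B : E →L[ℝ] F →L[ℝ] G) (s : ℕ) (c₁ b₁ : ι → ℝ)
    (c₂ b₂ : κ → ℝ) (u : ι → E) (v : κ → F) :
    ∑ j ∈ Finset.range s, B (∑ ℓ, (b₁ ℓ * legP j (c₁ ℓ)) • u ℓ)
        (∑ ℓ, (b₂ ℓ * legP j (c₂ ℓ)) • v ℓ) =
      ∑ i : ι × κ, (∑ j ∈ Finset.range s, b₁ i.1 * legP j (c₁ i.1) *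
        (b₂ i.2 * legP j (c₂ i.2))) • B (u i.1) (v i.2) := by
  simpa only [Pi.one_apply, one_smul, one_mul, Fintype.sum_prod_type] using
    sum_smul_bilin_sum_smul_sum_smul B (Finset.range s) Finset.univ Finset.univ 1
      (fun j ℓ => b₁ ℓ * legP j (c₁ ℓ)) (fun j ℓ => b₂ ℓ * legP j (c₂ ℓ)) u v

lemma IsExactQuadrature.sum_prod_legendre_mul_pow (h₁ : IsExactQuadrature (2 * s - 1) c₁ b₁)
    (h₂ : IsExactQuadrature (2 * s - 1) c₂ b₂) {n m : ℕ} (hnm : n + m < 2 * s) :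
    ∑ i : ι × κ, (∑ j ∈ Finset.range s, b₁ i.1 * legP j (c₁ i.1) *
        (b₂ i.2 * legP j (c₂ i.2))) * (c₁ i.1 ^ n * c₂ i.2 ^ m) =
      ∑ ℓ, b₁ ℓ * (c₁ ℓ ^ n * c₁ ℓ ^ m) := by
  have hdeg : (X ^ n * X ^ m : ℝ[X]).natDegree ≤ 2 * s - 1 := by
    rw [← pow_add, natDegree_X_pow]
    omega
  have hleg := h₁.sum_legendre_mul h₂ (p := X ^ n) (q := X ^ m) (by simpa using hnm)
  have hexact := h₁ _ hdeg
  have hprod := sum_bilin_legendre_eq_sum_prod_smul (ContinuousLinearMap.mul ℝ ℝ) s c₁ b₁ c₂ b₂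
    (fun ℓ => c₁ ℓ ^ n) (fun ℓ => c₂ ℓ ^ m)
  simp only [ContinuousLinearMap.mul_apply', smul_eq_mul] at hprod
  simp only [eval_mul, eval_pow, eval_X] at hleg hexact
  rw [← hprod, hleg, hexact]

theorem isBigO_sum_bilin_legendre_sub (B : E →L[ℝ] F →L[ℝ] G) {f : ℝ → E} {g : ℝ → F}
    (hf : ContDiffAt ℝ (2 * s : ℕ) f 0) (hg : ContDiffAt ℝ (2 * s : ℕ) g 0)
    (h₁ : IsExactQuadrature (2 * s - 1) c₁ b₁) (h₂ : IsExactQuadrature (2 * s - 1) c₂ b₂) :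
    (fun h => ∑ j ∈ Finset.range s, B (∑ ℓ, (b₁ ℓ * legP j (c₁ ℓ)) • f (c₁ ℓ * h))
        (∑ ℓ, (b₂ ℓ * legP j (c₂ ℓ)) • g (c₂ ℓ * h)) -
      ∑ ℓ, b₁ ℓ • B (f (c₁ ℓ * h)) (g (c₁ ℓ * h))) =O[𝓝 0] fun h => h ^ (2 * s) := by
  let w : (ι × κ) ⊕ ι → ℝ := Sum.elim (fun i => ∑ j ∈ Finset.range s,
    b₁ i.1 * legP j (c₁ i.1) * (b₂ i.2 * legP j (c₂ i.2))) fun ℓ => -b₁ ℓ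
  let x : (ι × κ) ⊕ ι → ℝ := Sum.elim (fun i => c₁ i.1) c₁
  let y : (ι × κ) ⊕ ι → ℝ := Sum.elim (fun i => c₂ i.2) c₁
  have hmoment : ∀ n m, n + m < 2 * s → ∑ i, w i * (x i ^ n * y i ^ m) = 0 := fun n m hnm => by
    simp only [Fintype.sum_sum_type, w, x, y, Sum.elim_inl, Sum.elim_inr,
      h₁.sum_prod_legendre_mul_pow h₂ hnm, neg_mul, Finset.sum_neg_distrib, add_neg_cancel]
  refine (isBigO_sum_smul_bilin_of_moments_eq_zero B hmoment hf hg).congr_left fun h => ?_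
  simp only [Fintype.sum_sum_type, w, x, y, Sum.elim_inl, Sum.elim_inr, neg_smul,
    Finset.sum_neg_distrib, ← sub_eq_add_neg, sum_bilin_legendre_eq_sum_prod_smul]

theorem stmt10_general (B : E →L[ℝ] F →L[ℝ] G) {f : ℝ → E} {g : ℝ → F}
    (hf : ContDiffAt ℝ (2 * s : ℕ) f 0) (hg : ContDiffAt ℝ (2 * s : ℕ) g 0)
    (hzero : ∀ᶠ t in 𝓝 0, B (f t) (g t) = 0)
    (h₁ : IsExactQuadrature (2 * s - 1) c₁ b₁) (h₂ : IsExactQuadrature (2 * s - 1) c₂ b₂) :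
    (fun h => ∑ j ∈ Finset.range s, B (∑ ℓ, (b₁ ℓ * legP j (c₁ ℓ)) • f (c₁ ℓ * h))
      (∑ ℓ, (b₂ ℓ * legP j (c₂ ℓ)) • g (c₂ ℓ * h))) =O[𝓝 0] fun h => h ^ (2 * s) := by
  have hvanish : ∀ᶠ h in 𝓝 (0 : ℝ), ∀ ℓ, B (f (c₁ ℓ * h)) (g (c₁ ℓ * h)) = 0 :=
    eventually_all.mpr fun ℓ => by
      have : Tendsto (fun h : ℝ => c₁ ℓ * h) (𝓝 0) (𝓝 0) := by
        simpa using (continuous_const_mul (c₁ ℓ)).tendsto 0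
      exact this.eventually hzero
  refine (isBigO_sum_bilin_legendre_sub B hf hg h₁ h₂).congr' ?_ .rfl
  filter_upwards [hvanish] with h hh
  simp [hh]

end LegendreExpansion

/-- discrete analogue of Lemma 3, supporting Theorem 2 of the paper.
With `g₁, g₂` smooth and pointwise orthogonal, `σ` smooth, `r, k ≥ s ≥ 1`, and quadratures of
exactness degrees `2r-1` and `2k-1` respectively,
`b̂(h) := ∑_{j<s} ⟨∑_ℓ b̂_ℓ P_j(ĉ_ℓ) g₁(σ(ĉ_ℓ h)), ∑_ℓ b_ℓ P_j(c_ℓ) g₂(σ(c_ℓ h))⟩`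
is `O(h^{2s})` as `h → 0⁺`. -/
theorem stmt10 (d : ℕ) (hd : 1 ≤ d)
    (g₁ g₂ : EuclideanSpace ℝ (Fin d) → EuclideanSpace ℝ (Fin d))
    (hg₁ : ContDiff ℝ (⊤ : ℕ∞) g₁) (hg₂ : ContDiff ℝ (⊤ : ℕ∞) g₂)
    (horth : ∀ y, ⟪g₁ y, g₂ y⟫ = 0)
    (σ : ℝ → EuclideanSpace ℝ (Fin d)) (hσ : ContDiff ℝ (⊤ : ℕ∞) σ)
    (s r k : ℕ) (hs : 1 ≤ s) (hr : s ≤ r) (hk : s ≤ k)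
    (ch bh : Fin r → ℝ) (hch : ∀ ℓ, ch ℓ ∈ Set.Icc (0:ℝ) 1)
    (hquadr : ∀ q : Polynomial ℝ, q.natDegree ≤ 2 * r - 1 →
      ∑ ℓ, bh ℓ * q.eval (ch ℓ) = ∫ x in (0:ℝ)..1, q.eval x)
    (c b : Fin k → ℝ) (hc : ∀ ℓ, c ℓ ∈ Set.Icc (0:ℝ) 1)
    (hquadk : ∀ q : Polynomial ℝ, q.natDegree ≤ 2 * k - 1 →
      ∑ ℓ, b ℓ * q.eval (c ℓ) = ∫ x in (0:ℝ)..1, q.eval x) :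
    ∃ C > (0:ℝ), ∃ h₀ > (0:ℝ), ∀ h : ℝ, 0 < h → h ≤ h₀ →
      |∑ j ∈ Finset.range s,
          ⟪∑ ℓ, (bh ℓ * legP j (ch ℓ)) • g₁ (σ (ch ℓ * h)),
           ∑ ℓ, (b ℓ * legP j (c ℓ)) • g₂ (σ (c ℓ * h))⟫| ≤ C * h ^ (2 * s) :=
  exists_pos_forall_norm_le_of_isBigO_pow <| (stmt10_general (innerSL ℝ)
    (contDiff_infty.mp (hg₁.comp hσ) _).contDiffAt
    (contDiff_infty.mp (hg₂.comp hσ) _).contDiffAt (.of_forall fun t => horth (σ t))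
    (IsExactQuadrature.mono (by omega) hquadr)
    (IsExactQuadrature.mono (by omega) hquadk)).mono nhdsWithin_le_nhds
end
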